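/- arXiv:2101.09602 — 7 statements merged into one kernel-verified Lean document; each statement's English description precedes it below -/
import Mathlib

section
/- Let q be a prime and M2 an integer with q ∤ M2. Then ∑_{v3 ∈ (ℤ/qℤ)ˣ} ∑_{v4 ∈ ℤ/qℤ} e(M2·v3*·v4² / q) = 0, where v3* denotes the multiplicative inverse of v3 modulo q. (This evaluates the Sp(4) Kloosterman sum Kl_{q, s_α s_β s_α}((q,q), M, N) to be 0.) -/
/-!
Let `ψ` be a primitive additive character of a finite field `F` and `g : X → F` a function on a
finite set. Exchanging the sums in `∑ u : Fˣ, ∑ x, ψ (u⁻¹ * g x)`, orthogonality gives `#F - 1` for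
each zero of `g` and `-1` for each other point, so the double sum is `#F * #{x | g x = 0} - #X`.
When `X = F` and `g x = a * x ^ n` with `a ≠ 0` and `n ≠ 0`, the only zero is `x = 0`, and the two
terms cancel.
-/

theorem sum_eq_apply_zero_add_sum_units {G₀ M : Type*} [GroupWithZero G₀] [Fintype G₀]
    [DecidableEq G₀] [AddCommMonoid M] (f : G₀ → M) : ∑ x, f x = f 0 + ∑ u : G₀ˣ, f u := by
  rw [Fintype.sum_eq_add_sum_subtype_ne f 0, ← unitsEquivNeZero.sum_comp]
  rfl

section FiniteField

variable {F R : Type*} [Field F] [Fintype F] [DecidableEq F] [CommRing R] [IsDomain R]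
  {ψ : AddChar F R}

theorem sum_units_addChar_mul (hψ : ψ.IsPrimitive) (b : F) :
    ∑ u : Fˣ, ψ (u * b) = (if b = 0 then (Fintype.card F : R) else 0) - 1 := by
  have orthogonality := AddChar.sum_mulShift b hψ
  rw [sum_eq_apply_zero_add_sum_units, zero_mul, AddChar.map_zero_eq_one] at orthogonality
  rw [eq_sub_iff_add_eq', orthogonality, Nat.cast_ite, Nat.cast_zero]

theorem sum_units_sum_addChar_inv_mul (hψ : ψ.IsPrimitive) {X : Type*} [Fintype X] (g : X → F) :
    ∑ u : Fˣ, ∑ x, ψ (↑u⁻¹ * g x) =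
      Fintype.card F * Fintype.card {x // g x = 0} - Fintype.card X := by
  calc ∑ u : Fˣ, ∑ x, ψ (↑u⁻¹ * g x)
      = ∑ x, ∑ u : Fˣ, ψ (u * g x) := by
        rw [Finset.sum_comm]
        exact Fintype.sum_congr _ _ fun x ↦
          Equiv.sum_comp (Equiv.inv Fˣ) fun u ↦ ψ (u * g x)
    _ = ∑ x, ((if g x = 0 then (Fintype.card F : R) else 0) - 1) := by
        simp only [sum_units_addChar_mul hψ]
    _ = Fintype.card F * Fintype.card {x // g x = 0} - Fintype.card X := by
        simp [Finset.sum_ite, Fintype.card_subtype, mul_comm]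

theorem sp4_kloosterman_salpha_sbeta_salpha_eval_general (hψ : ψ.IsPrimitive) {a : F} (ha : a ≠ 0)
    {n : ℕ} (hn : n ≠ 0) : ∑ u : Fˣ, ∑ x : F, ψ (a * ↑u⁻¹ * x ^ n) = 0 := by
  have zero_iff (x : F) : a * x ^ n = 0 ↔ x = 0 := by simp [ha, hn]
  have double_sum := sum_units_sum_addChar_inv_mul hψ fun x ↦ a * x ^ n
  simpa only [zero_iff, Fintype.card_unique, Nat.cast_one, mul_one, sub_self, mul_left_comm,
    mul_assoc] using double_sum

end FiniteField

theorem exp_two_pi_I_mul_val_div_eq_stdAddChar {N : ℕ} [NeZero N] (x : ZMod N) :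
    Complex.exp (2 * Real.pi * Complex.I * ((x.val : ℂ) / (N : ℂ))) = ZMod.stdAddChar x := by
  rw [ZMod.stdAddChar_apply, ZMod.toCircle_apply, mul_div_assoc]

/-- Evaluation of the `Sp(4)` Kloosterman sum `Kl_{q, s_α s_β s_α}((q,q), M, N)`:
for a prime `q` and an integer `M2` with `q ∤ M2`, the exponential sum
`∑_{v3 ∈ (ℤ/qℤ)ˣ} ∑_{v4 ∈ ℤ/qℤ} e(M2 · v3⁻¹ · v4² / q)` vanishes. -/
theorem sp4_kloosterman_salpha_sbeta_salpha_eval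
    (q : ℕ) [Fact q.Prime] (M2 : ℤ) (hM2 : ¬ (q : ℤ) ∣ M2) :
    ∑ v3 : (ZMod q)ˣ, ∑ v4 : ZMod q,
      Complex.exp (2 * Real.pi * Complex.I *
        ((((M2 : ZMod q) * ((v3⁻¹ : (ZMod q)ˣ) : ZMod q) * v4 ^ 2).val : ℂ) / (q : ℂ)))
      = 0 := by
  simp only [exp_two_pi_I_mul_val_div_eq_stdAddChar]
  exact sp4_kloosterman_salpha_sbeta_salpha_eval_general (ZMod.isPrimitive_stdAddChar q)
    (mt (ZMod.intCast_zmod_eq_zero_iff_dvd M2 q).mp hM2) two_ne_zero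
end

section
/- Let q be a prime and let M2, N2 be integers coprime to q. Then ∑ e((M2·v3·v34* + N2·v14)/q) = 0, where the sum runs over all triples (v3, v4, v14) ∈ (ℤ/qℤ)³ such that (v3, v4) ≠ (0,0) and v34 := v3·v14 − v4² ≠ 0 in ℤ/qℤ, and v34* denotes the multiplicative inverse of v34 modulo q. (This evaluates the Sp(4) Kloosterman sum Kl_{q, w₀}((q,q²), M, N) to be 0, where w₀ is the long Weyl element.) -/
/-!
The condition `v34 ≠ 0` already forces `(v3, v4) ≠ (0, 0)`, so the sum runs over the invertible
symmetric matrices `X = !![v3, v4; v4, v14]`, and its phase is `M * (X⁻¹)₂₂ + N * X₂₂`. The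
substitution `X ↦ X⁻¹` exchanges `M` and `N`, so we may assume `M ≠ 0`. Fix `v14 = x`. If `x ≠ 0`,
trading `v3` for `d = v34` gives the phase `M x⁻¹ + M x⁻¹ v4² d⁻¹ + N x`; summing over `d ≠ 0` gives
`#F - 1` times a constant for `v4 = 0` and `-1` times the same constant for each of the other
`#F - 1` values of `v4`, hence zero in total. If `x = 0`, then `v34 = -v4²` and the phase is a
nonzero multiple of the free variable `v3`.
-/

section SymmetricMatrix

variable {F : Type*} [Field F]

/-- The determinant of the symmetric matrix `!![a, b; b, x]`, encoded as the triple `(a, b, x)`. -/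
def symDet (v : F × F × F) : F :=
  v.1 * v.2.2 - v.2.1 ^ 2

/-- The inverse of the symmetric matrix `!![a, b; b, x]`, encoded as the triple `(a, b, x)`.
Singular matrices are sent to `0`. -/
def symInv (v : F × F × F) : F × F × F :=
  (v.2.2 * (symDet v)⁻¹, -v.2.1 * (symDet v)⁻¹, v.1 * (symDet v)⁻¹)

theorem symDet_symInv (v : F × F × F) : symDet (symInv v) = (symDet v)⁻¹ :=
  calc symDet (symInv v)
    _ = (symDet v)⁻¹ * symDet v * (symDet v)⁻¹ := by simp only [symInv, symDet]; ring
    _ = (symDet v)⁻¹ := by simpa only [inv_inv] using mul_inv_mul_cancel (symDet v)⁻¹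

theorem symInv_symInv {v : F × F × F} (hv : symDet v ≠ 0) : symInv (symInv v) = v := by
  rw [symInv, symDet_symInv, inv_inv]
  simp [symInv, hv]

theorem ne_zero_or_ne_zero_of_symDet_ne_zero {v : F × F × F} (hv : symDet v ≠ 0) :
    v.1 ≠ 0 ∨ v.2.1 ≠ 0 := by
  contrapose! hv
  simp [symDet, hv]

end SymmetricMatrix

section AddChar

variable {F R : Type*} [Field F] [Fintype F] [DecidableEq F] [CommRing R]

/-- The `Sp(4)` Kloosterman sum for the long Weyl element and moduli `(q, q²)`, over a finite field
and with an arbitrary additive character in place of `e(·/q)`. The condition `(v3, v4) ≠ (0, 0)`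
is left out, being implied by `symDet v ≠ 0`. -/
def sp4KloostermanSum (ψ : AddChar F R) (M N : F) : R :=
  ∑ v : F × F × F with symDet v ≠ 0, ψ (M * v.1 * (symDet v)⁻¹ + N * v.2.2)

theorem sp4KloostermanSum_comm (ψ : AddChar F R) (M N : F) :
    sp4KloostermanSum ψ M N = sp4KloostermanSum ψ N M := by
  refine Finset.sum_nbij' symInv symInv (by simp [symDet_symInv]) (by simp [symDet_symInv])
    (fun v hv ↦ symInv_symInv (Finset.mem_filter.mp hv).2)
    (fun v hv ↦ symInv_symInv (Finset.mem_filter.mp hv).2) fun v hv ↦ ?_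
  have hd : symDet v ≠ 0 := (Finset.mem_filter.mp hv).2
  rw [symDet_symInv, inv_inv]
  congr 1
  simp only [symInv]
  field_simp
  ring

theorem sum_symDet_ne_zero_addChar_of_ne_zero (ψ : AddChar F R) (M b : F) {x : F} (hx : x ≠ 0) :
    ∑ a with symDet (a, b, x) ≠ 0, ψ (M * a * (symDet (a, b, x))⁻¹) =
      ψ (M * x⁻¹) * ∑ d with d ≠ 0, ψ (M * x⁻¹ * b ^ 2 * d⁻¹) := by
  have symDet_fiber (d : F) : symDet ((d + b ^ 2) * x⁻¹, b, x) = d := by simp [symDet, hx]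
  have fiber_symDet (a : F) : (symDet (a, b, x) + b ^ 2) * x⁻¹ = a := by simp [symDet, hx]
  rw [Finset.mul_sum]
  refine Finset.sum_nbij' (fun a ↦ symDet (a, b, x)) (fun d ↦ (d + b ^ 2) * x⁻¹)
    (by simp) (by simp [symDet_fiber]) (fun a _ ↦ fiber_symDet a) (fun d _ ↦ symDet_fiber d)
    fun a ha ↦ ?_
  have hd : symDet (a, b, x) ≠ 0 := (Finset.mem_filter.mp ha).2
  rw [← AddChar.map_add_eq_mul]
  congr 1
  calc M * a * (symDet (a, b, x))⁻¹
    _ = M * ((symDet (a, b, x) + b ^ 2) * x⁻¹) * (symDet (a, b, x))⁻¹ := by rw [fiber_symDet]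
    _ = M * x⁻¹ + M * x⁻¹ * b ^ 2 * (symDet (a, b, x))⁻¹ := by field_simp

variable [IsDomain R] {ψ : AddChar F R}

theorem sum_ne_zero_addChar_mul_inv (hψ : ψ.IsPrimitive) (c : F) :
    ∑ d with d ≠ 0, ψ (c * d⁻¹) = (if c = 0 then (Fintype.card F : R) else 0) - 1 := by
  have sum_all : ∑ d, ψ (c * d⁻¹) = if c = 0 then (Fintype.card F : R) else 0 := by
    rw [← Equiv.sum_comp (Equiv.inv F)]
    simpa [mul_comm c] using AddChar.sum_mulShift c hψ
  rw [← sum_all, ← Finset.sum_erase_add _ _ (Finset.mem_univ (0 : F)), Finset.filter_ne']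
  simp

theorem sum_sum_ne_zero_addChar_mul_sq_mul_inv (hψ : ψ.IsPrimitive) {c : F} (hc : c ≠ 0) :
    ∑ b, ∑ d with d ≠ 0, ψ (c * b ^ 2 * d⁻¹) = 0 := by
  simp [sum_ne_zero_addChar_mul_inv hψ, hc]

theorem sum_symDet_ne_zero_addChar_of_eq_zero (hψ : ψ.IsPrimitive) {M : F} (hM : M ≠ 0) (b : F) :
    ∑ a with symDet (a, b, 0) ≠ 0, ψ (M * a * (symDet (a, b, 0))⁻¹) = 0 := by
  rcases eq_or_ne b 0 with rfl | hb
  · simp [symDet]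
  · have hc : M * (-b ^ 2)⁻¹ ≠ 0 := by simp [hM, hb]
    calc ∑ a with symDet (a, b, 0) ≠ 0, ψ (M * a * (symDet (a, b, 0))⁻¹)
      _ = ∑ a, ψ (a * (M * (-b ^ 2)⁻¹)) := by simp [symDet, hb, mul_left_comm, mul_assoc]
      _ = 0 := by rw [AddChar.sum_mulShift _ hψ, if_neg hc, Nat.cast_zero]

theorem sum_sum_symDet_ne_zero_addChar_eq_zero (hψ : ψ.IsPrimitive) {M : F} (hM : M ≠ 0) (x : F) :
    ∑ b, ∑ a with symDet (a, b, x) ≠ 0, ψ (M * a * (symDet (a, b, x))⁻¹) = 0 := by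
  rcases eq_or_ne x 0 with rfl | hx
  · exact Finset.sum_eq_zero fun b _ ↦ sum_symDet_ne_zero_addChar_of_eq_zero hψ hM b
  · simp_rw [sum_symDet_ne_zero_addChar_of_ne_zero ψ M _ hx]
    rw [← Finset.mul_sum,
      sum_sum_ne_zero_addChar_mul_sq_mul_inv hψ (mul_ne_zero hM (inv_ne_zero hx)), mul_zero]

theorem sp4KloostermanSum_eq_zero_of_left_ne_zero (hψ : ψ.IsPrimitive) {M : F} (hM : M ≠ 0)
    (N : F) : sp4KloostermanSum ψ M N = 0 :=
  calc sp4KloostermanSum ψ M N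
    _ = ∑ x, (∑ b, ∑ a with symDet (a, b, x) ≠ 0, ψ (M * a * (symDet (a, b, x))⁻¹)) *
          ψ (N * x) := by
      simp_rw [sp4KloostermanSum, Finset.sum_filter, Fintype.sum_prod_type_right,
        AddChar.map_add_eq_mul, Finset.sum_mul, ite_mul, zero_mul]
    _ = 0 := by
      simp_rw [sum_sum_symDet_ne_zero_addChar_eq_zero hψ hM, zero_mul, Finset.sum_const_zero]

theorem sp4_kloosterman_w0_qq2_eval_general (hψ : ψ.IsPrimitive) {M N : F}
    (hMN : M ≠ 0 ∨ N ≠ 0) :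
    ∑ v ∈ Finset.univ.filter (fun v : F × F × F =>
        (v.1 ≠ 0 ∨ v.2.1 ≠ 0) ∧ v.1 * v.2.2 - v.2.1 ^ 2 ≠ 0),
      ψ (M * v.1 * (v.1 * v.2.2 - v.2.1 ^ 2)⁻¹ + N * v.2.2) = 0 := by
  change ∑ v : F × F × F with (v.1 ≠ 0 ∨ v.2.1 ≠ 0) ∧ symDet v ≠ 0,
    ψ (M * v.1 * (symDet v)⁻¹ + N * v.2.2) = 0
  rw [Finset.filter_congr fun v _ ↦ and_iff_right_of_imp ne_zero_or_ne_zero_of_symDet_ne_zero,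
    ← sp4KloostermanSum]
  rcases hMN with hM | hN
  · exact sp4KloostermanSum_eq_zero_of_left_ne_zero hψ hM N
  · rw [sp4KloostermanSum_comm, sp4KloostermanSum_eq_zero_of_left_ne_zero hψ hN M]

end AddChar

theorem stdAddChar_eq_exp_val_div {q : ℕ} [NeZero q] (a : ZMod q) :
    ZMod.stdAddChar a = Complex.exp (2 * Real.pi * Complex.I * ((a.val : ℂ) / (q : ℂ))) := by
  rw [ZMod.stdAddChar_apply, ZMod.toCircle_apply, mul_div_assoc]

theorem intCast_zmod_ne_zero_of_isCoprime {q : ℕ} [Nontrivial (ZMod q)] {n : ℤ}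
    (hn : IsCoprime n (q : ℤ)) : (n : ZMod q) ≠ 0 :=
  ((ZMod.coe_int_isUnit_iff_isCoprime n q).mpr hn.symm).ne_zero

/-- Evaluation of the `Sp(4)` Kloosterman sum `Kl_{q, w₀}((q,q²), M, N)`:
for a prime `q` and integers `M2, N2` coprime to `q`, the exponential sum over triples
`(v3, v4, v14) ∈ (ℤ/qℤ)³` with `(v3, v4) ≠ (0,0)` and `v34 := v3·v14 - v4² ≠ 0`
of `e((M2·v3·v34⁻¹ + N2·v14)/q)` vanishes. -/
theorem sp4_kloosterman_w0_qq2_eval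
    (q : ℕ) [Fact q.Prime] (M2 N2 : ℤ)
    (hM2 : IsCoprime M2 (q : ℤ)) (hN2 : IsCoprime N2 (q : ℤ)) :
    ∑ v ∈ Finset.univ.filter (fun v : ZMod q × ZMod q × ZMod q =>
        (v.1 ≠ 0 ∨ v.2.1 ≠ 0) ∧ v.1 * v.2.2 - v.2.1 ^ 2 ≠ 0),
      Complex.exp (2 * Real.pi * Complex.I *
        ((((M2 : ZMod q) * v.1 * (v.1 * v.2.2 - v.2.1 ^ 2)⁻¹
            + (N2 : ZMod q) * v.2.2).val : ℂ) / (q : ℂ)))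
      = 0 := by
  simp_rw [← stdAddChar_eq_exp_val_div]
  exact sp4_kloosterman_w0_qq2_eval_general (ZMod.isPrimitive_stdAddChar q)
    (.inl (intCast_zmod_ne_zero_of_isCoprime hM2))
end

section
/- Let q be a prime, let v4 be an integer with q ∤ v4, and let v14 be an integer with q ∤ v14. Then the map f: {1, 2, …, q−1} → ℤ/q²ℤ defined by f(v3) = v3·(v3·v14 − v4²·q)⁻¹ (the inverse taken in (ℤ/q²ℤ)ˣ) is injective, and its image is exactly the set {s ∈ (ℤ/q²ℤ)ˣ : v14·s ≡ 1 (mod q)} ∖ {u}, where u ∈ (ℤ/q²ℤ)ˣ is the inverse of v14 modulo q². -/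
/-!
Write `a = v14`, `c = v4 ^ 2`, and put `ε = q ^ n` in `R = ZMod (q ^ (n + 1))`, with `n = 1` the
case at hand. The annihilator of `ε` is the kernel of the reduction `R → ZMod q`. The equation
`s = x (x a - c ε)⁻¹` says `x (a s - 1) = ε s c`, so for a unit `x` it forces `a s - 1 = ε k`, and
then it reduces to `x k = s c` in the field `ZMod q`. Since `s c` is nonzero there, this is solvable
in nonzero `x` exactly when `k ≠ 0` in `ZMod q`, that is, when `a s ≠ 1`, and the residue of `x` is
then unique.
-/

open scoped Ring

section LocalHom

variable {R S : Type*} [CommRing R] [CommRing S] {φ : R →+* S} {ε a c s x : R}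

theorem isUnit_mul_sub_mul_of_map_eq_zero [IsLocalHom φ] (hφε : φ ε = 0) (hx : IsUnit x)
    (ha : IsUnit a) : IsUnit (x * a - c * ε) := by
  apply isUnit_of_map_unit φ
  rw [map_sub, map_mul φ c, hφε, mul_zero, sub_zero]
  exact (hx.mul ha).map φ

theorem eq_mul_inverse_iff_map_mul_eq [IsLocalHom φ] (hφε : φ ε = 0)
    (hann : ∀ y, ε * y = 0 ↔ φ y = 0) (hx : IsUnit x) (ha : IsUnit a) {k : R}
    (hk : a * s - 1 = ε * k) :
    s = x * (x * a - c * ε)⁻¹ʳ ↔ φ x * φ k = φ s * φ c := by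
  have hdiff : s * (x * a - c * ε) - x = ε * (x * k - s * c) := by
    linear_combination x * hk
  rw [Ring.eq_mul_inverse_iff_mul_eq _ _ _ (isUnit_mul_sub_mul_of_map_eq_zero hφε hx ha),
    ← sub_eq_zero, hdiff, hann, map_sub, map_mul, map_mul, sub_eq_zero]

theorem dvd_mul_sub_one_of_mul_mul_sub_mul_eq (hx : IsUnit x)
    (h : s * (x * a - c * ε) = x) : ε ∣ a * s - 1 := by
  rw [← hx.dvd_mul_left]
  exact ⟨s * c, by linear_combination h⟩

theorem dvd_mul_sub_one_and_ne_inverse_iff (hann : ∀ y, ε * y = 0 ↔ φ y = 0) (ha : IsUnit a) :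
    ε ∣ a * s - 1 ∧ s ≠ a⁻¹ʳ ↔ ∃ k, a * s - 1 = ε * k ∧ φ k ≠ 0 := by
  have eq_inverse_iff : s = a⁻¹ʳ ↔ a * s - 1 = 0 := by
    rw [sub_eq_zero, mul_comm, ← Ring.eq_mul_inverse_iff_mul_eq _ _ _ ha, one_mul]
  rw [ne_eq, eq_inverse_iff, dvd_def, ← exists_and_right]
  refine exists_congr fun k => and_congr_right fun hk => ?_
  rw [hk, hann]

theorem mul_inverse_mem_dvd_mul_sub_one_diff [Nontrivial S] [IsLocalHom φ] (hφε : φ ε = 0)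
    (hann : ∀ y, ε * y = 0 ↔ φ y = 0) (hx : IsUnit x) (ha : IsUnit a) (hc : IsUnit c) :
    x * (x * a - c * ε)⁻¹ʳ ∈ {s | IsUnit s ∧ ε ∣ a * s - 1} \ {a⁻¹ʳ} := by
  have hden : IsUnit (x * a - c * ε) := isUnit_mul_sub_mul_of_map_eq_zero hφε hx ha
  have hs : IsUnit (x * (x * a - c * ε)⁻¹ʳ) := hx.mul hden.ringInverse
  obtain ⟨k, hk⟩ := dvd_mul_sub_one_of_mul_mul_sub_mul_eq hx
    (Ring.inverse_mul_cancel_right _ x hden)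
  have hxk := (eq_mul_inverse_iff_map_mul_eq hφε hann hx ha hk).mp rfl
  have hφk : φ k ≠ 0 := right_ne_zero_of_mul (hxk ▸ ((hs.map φ).mul (hc.map φ)).ne_zero)
  have ⟨hdvd, hne⟩ := (dvd_mul_sub_one_and_ne_inverse_iff hann ha).mpr ⟨k, hk, hφk⟩
  exact ⟨⟨hs, hdvd⟩, hne⟩

theorem bijOn_mul_inverse_mul_sub_mul {K : Type*} [Field K] {φ : R →+* K} [IsLocalHom φ]
    (hφε : φ ε = 0) (hann : ∀ y, ε * y = 0 ↔ φ y = 0) (ha : IsUnit a) (hc : IsUnit c)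
    {ι : Type*} {r : ι → R} {T : Set ι} (hr : Set.BijOn (fun i => φ (r i)) T {0}ᶜ) :
    Set.BijOn (fun i => r i * (r i * a - c * ε)⁻¹ʳ) T
      ({s | IsUnit s ∧ ε ∣ a * s - 1} \ {a⁻¹ʳ}) := by
  have isUnit_r {i} (hi : i ∈ T) : IsUnit (r i) :=
    isUnit_of_map_unit φ _ (isUnit_iff_ne_zero.mpr (hr.mapsTo hi))
  have mapsTo {i} (hi : i ∈ T) :=
    mul_inverse_mem_dvd_mul_sub_one_diff hφε hann (isUnit_r hi) ha hc
  refine ⟨fun i hi => mapsTo hi, fun i hi j hj hij => ?_, fun s ⟨⟨hs, hdvd⟩, hne⟩ => ?_⟩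
  · obtain ⟨⟨-, hdvd⟩, hne⟩ := mapsTo hi
    obtain ⟨k, hk, hφk⟩ := (dvd_mul_sub_one_and_ne_inverse_iff hann ha).mp ⟨hdvd, hne⟩
    have hik := (eq_mul_inverse_iff_map_mul_eq hφε hann (isUnit_r hi) ha hk).mp rfl
    have hjk := (eq_mul_inverse_iff_map_mul_eq hφε hann (isUnit_r hj) ha hk).mp hij
    exact hr.injOn hi hj (mul_right_cancel₀ hφk (hik.trans hjk.symm))
  · obtain ⟨k, hk, hφk⟩ := (dvd_mul_sub_one_and_ne_inverse_iff hann ha).mp ⟨hdvd, hne⟩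
    have hsc : φ s * φ c ≠ 0 := ((hs.map φ).mul (hc.map φ)).ne_zero
    obtain ⟨i, hi, hri⟩ := hr.surjOn (div_ne_zero hsc hφk)
    have hik : φ (r i) * φ k = φ s * φ c := (eq_div_iff hφk).mp hri
    exact ⟨i, hi, ((eq_mul_inverse_iff_map_mul_eq hφε hann (isUnit_r hi) ha hk).mpr hik).symm⟩

end LocalHom

theorem castHom_eq_zero_iff_natCast_dvd {m n : ℕ} (h : m ∣ n) (x : ZMod n) :
    ZMod.castHom h (ZMod m) x = 0 ↔ (m : ZMod n) ∣ x := by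
  constructor
  · obtain ⟨t, rfl⟩ := ZMod.intCast_surjective x
    rw [map_intCast, ZMod.intCast_zmod_eq_zero_iff_dvd]
    intro hmt
    exact_mod_cast Int.cast_dvd_cast (α := ZMod n) _ _ hmt
  · intro hmx
    simpa using map_dvd (ZMod.castHom h (ZMod m)) hmx

theorem castHom_eq_one_iff_natCast_dvd_sub_one {m n : ℕ} (h : m ∣ n) (x : ZMod n) :
    ZMod.castHom h (ZMod m) x = 1 ↔ (m : ZMod n) ∣ x - 1 := by
  rw [← castHom_eq_zero_iff_natCast_dvd h, map_sub, map_one, sub_eq_zero]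

theorem isLocalHom_castHom_pow (q : ℕ) {k : ℕ} (hk : k ≠ 0) :
    IsLocalHom (ZMod.castHom (dvd_pow_self q hk) (ZMod q)) where
  map_nonunit x hx := by
    obtain ⟨t, rfl⟩ := ZMod.intCast_surjective x
    rw [map_intCast, ZMod.coe_int_isUnit_iff_isCoprime] at hx
    rw [ZMod.coe_int_isUnit_iff_isCoprime, Nat.cast_pow]
    exact hx.pow_left

theorem natCast_pow_mul_eq_zero_iff {q : ℕ} (hq : q ≠ 0) (n : ℕ) (y : ZMod (q ^ (n + 1))) :
    (q : ZMod (q ^ (n + 1))) ^ n * y = 0 ↔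
      ZMod.castHom (dvd_pow_self q n.succ_ne_zero) (ZMod q) y = 0 := by
  obtain ⟨t, rfl⟩ := ZMod.intCast_surjective y
  have hqn : (q : ℤ) ^ n ≠ 0 := pow_ne_zero n (Nat.cast_ne_zero.mpr hq)
  rw [map_intCast, ZMod.intCast_zmod_eq_zero_iff_dvd, ← mul_dvd_mul_iff_left hqn, ← pow_succ,
    ← Nat.cast_pow q (n + 1), ← ZMod.intCast_zmod_eq_zero_iff_dvd]
  push_cast
  rfl

theorem bijOn_intCast_Icc_one_compl_zero (q : ℕ) [NeZero q] :
    Set.BijOn (fun x : ℤ => (x : ZMod q)) (Set.Icc 1 ((q : ℤ) - 1)) {0}ᶜ := by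
  refine ⟨fun x hx hx0 => ?_, fun x hx y hy hxy => ?_, fun y hy => ?_⟩
  · have := Int.le_of_dvd (by grind) ((ZMod.intCast_zmod_eq_zero_iff_dvd x q).mp hx0)
    grind
  · have hmod := (ZMod.intCast_eq_intCast_iff' x y q).mp hxy
    rwa [Int.emod_eq_of_lt (by grind) (by grind), Int.emod_eq_of_lt (by grind) (by grind)] at hmod
  · have := ZMod.val_lt y
    have := (ZMod.val_ne_zero y).mpr hy
    exact ⟨y.val, ⟨by lia, by lia⟩, by simp⟩

theorem inv_eq_ringInverse_of_isUnit {n : ℕ} {x : ZMod n} (hx : IsUnit x) : x⁻¹ = x⁻¹ʳ :=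
  ZMod.inv_eq_of_mul_eq_one n x _ (Ring.mul_inverse_cancel x hx)

theorem sp4_w0_qq3_residue_bijection_general
    {q : ℕ} (hq : q.Prime) {n : ℕ} (hn : n ≠ 0) {a c : ℤ}
    (ha : ¬ (q : ℤ) ∣ a) (hc : ¬ (q : ℤ) ∣ c) :
    Set.BijOn (fun x : ℤ =>
        (x : ZMod (q ^ (n + 1))) * ((x * a - c * q ^ n : ℤ) : ZMod (q ^ (n + 1)))⁻¹)
      (Set.Icc 1 ((q : ℤ) - 1))
      ({s : ZMod (q ^ (n + 1)) | IsUnit s ∧ (q : ZMod (q ^ (n + 1))) ^ n ∣ a * s - 1}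
        \ {(a : ZMod (q ^ (n + 1)))⁻¹}) := by
  have : Fact q.Prime := ⟨hq⟩
  let φ := ZMod.castHom (dvd_pow_self q n.succ_ne_zero) (ZMod q)
  have : IsLocalHom φ := isLocalHom_castHom_pow q n.succ_ne_zero
  have hφε : φ ((q : ZMod (q ^ (n + 1))) ^ n) = 0 := by simp [hn]
  have hunit {t : ℤ} (ht : (t : ZMod q) ≠ 0) : IsUnit (t : ZMod (q ^ (n + 1))) :=
    isUnit_of_map_unit φ _ (by simpa using ht)
  have hau := hunit (mt (ZMod.intCast_zmod_eq_zero_iff_dvd a q).mp ha)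
  have hcu := hunit (mt (ZMod.intCast_zmod_eq_zero_iff_dvd c q).mp hc)
  have hreps := bijOn_intCast_Icc_one_compl_zero q
  rw [inv_eq_ringInverse_of_isUnit hau]
  refine (bijOn_mul_inverse_mul_sub_mul hφε (natCast_pow_mul_eq_zero_iff hq.ne_zero n) hau hcu
    (r := Int.cast) (by simpa using hreps)).congr fun x hx => ?_
  have hden := isUnit_mul_sub_mul_of_map_eq_zero (c := (c : ZMod (q ^ (n + 1)))) hφε
    (hunit (hreps.mapsTo hx)) hau
  push_cast
  rw [inv_eq_ringInverse_of_isUnit hden]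

/-- For a prime `q` and integers `v4, v14` coprime to `q`, the map
`f(v3) = v3·(v3·v14 − v4²·q)⁻¹` (inverse taken mod `q²`) is injective on
`{1, …, q−1}`, and its image is exactly the set of units `s` mod `q²` with
`v14·s ≡ 1 (mod q)`, minus the inverse `u` of `v14` modulo `q²`. -/
theorem sp4_w0_qq3_residue_bijection
    (q : ℕ) (hq : q.Prime) (v4 v14 : ℤ)
    (hv4 : ¬ (q : ℤ) ∣ v4) (hv14 : ¬ (q : ℤ) ∣ v14) :
    Set.InjOn (fun v3 : ℤ =>
        ((v3 : ZMod (q ^ 2)) * (((v3 * v14 - v4 ^ 2 * q : ℤ) : ZMod (q ^ 2)))⁻¹))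
      (Set.Icc 1 ((q : ℤ) - 1)) ∧
    (fun v3 : ℤ =>
        ((v3 : ZMod (q ^ 2)) * (((v3 * v14 - v4 ^ 2 * q : ℤ) : ZMod (q ^ 2)))⁻¹)) ''
        (Set.Icc 1 ((q : ℤ) - 1)) =
      {s : ZMod (q ^ 2) | IsUnit s ∧
          ZMod.castHom (dvd_pow_self q (by norm_num : (2 : ℕ) ≠ 0)) (ZMod q)
            ((v14 : ZMod (q ^ 2)) * s) = 1}
        \ {(((v14 : ZMod (q ^ 2)))⁻¹)} := by
  have hbij := sp4_w0_qq3_residue_bijection_general (c := v4 ^ 2) hq one_ne_zero hv14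
    (mt (Nat.prime_iff_prime_int.mp hq).dvd_of_dvd_pow hv4)
  simp only [castHom_eq_one_iff_natCast_dvd_sub_one]
  simpa only [pow_one] using And.intro hbij.injOn hbij.image_eq
end

section
/- For every ε > 0 there is a constant C(ε) > 0 with the following property. For (x13, x23, x24) ∈ ℝ³ define the row vectors r₃ = (0, 1, x23, x24) and r₄ = (−1, 0, −x13, −x23) in ℝ⁴, and set Δ₁(x) = ‖r₃‖ (Euclidean norm) and Δ₂(x) = √(‖r₃‖²·‖r₄‖² − ⟨r₃, r₄⟩²) (the area of the parallelogram spanned by r₃ and r₄). Then for all B₁, B₂ > 0, the Lebesgue measure of the set {(x13, x23, x24) ∈ ℝ³ : Δ₁(x) ≤ B₁ and Δ₂(x) ≤ B₂} is at most C(ε)·(B₁·B₂)^{1+ε}. -/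
open MeasureTheory

/-!
Write `(a, b, c) = (x13, x23, x24)`. The bound on `Δ₁` confines `b` and `c` to `[-B₁, B₁]`. By the
Cauchy–Binet identity `Δ₂² = 1 + a² + 2b² + c² + (ac - b²)²`, and completing the square in `a`
shows that for fixed `(b, c)` the bound on `Δ₂` confines `a` to an interval of half-length
`B₂ / √(1 + c²)`. Integrating over `b` and `c` gives the volume bound `8 B₁ B₂ arsinh B₁`, and
`arsinh` grows only logarithmically. For small `B₁` or `B₂` the region is empty, since
`Δ₁, Δ₂ ≥ 1`.
-/

section Arsinh

lemma continuous_inv_sqrt_one_add_sq : Continuous fun t : ℝ => (√(1 + t ^ 2))⁻¹ :=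
  Continuous.inv₀ (by fun_prop) fun t => (Real.sqrt_pos.2 (by positivity)).ne'

lemma integral_inv_sqrt_one_add_sq (a b : ℝ) :
    ∫ t in a..b, (√(1 + t ^ 2))⁻¹ = Real.arsinh b - Real.arsinh a :=
  intervalIntegral.integral_eq_sub_of_hasDerivAt (fun t _ => Real.hasDerivAt_arsinh t)
    (continuous_inv_sqrt_one_add_sq.intervalIntegrable a b)

lemma setLIntegral_Icc_inv_sqrt_one_add_sq {a b : ℝ} (hab : a ≤ b) :
    ∫⁻ t in Set.Icc a b, ENNReal.ofReal (√(1 + t ^ 2))⁻¹ =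
      ENNReal.ofReal (Real.arsinh b - Real.arsinh a) := by
  rw [← integral_inv_sqrt_one_add_sq, intervalIntegral.integral_of_le hab,
    ← integral_Icc_eq_integral_Ioc, ofReal_integral_eq_lintegral_ofReal]
  · exact continuous_inv_sqrt_one_add_sq.continuousOn.integrableOn_compact isCompact_Icc
  · exact .of_forall fun t => by positivity

lemma arsinh_le_log_one_add_two_mul {x : ℝ} (hx : 0 ≤ x) :
    Real.arsinh x ≤ Real.log (1 + 2 * x) := by
  have hsqrt : √(1 + x ^ 2) ≤ 1 + x := Real.sqrt_le_iff.2 ⟨by positivity, by nlinarith⟩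
  exact Real.log_le_log (by positivity) (by linarith)

lemma arsinh_le_rpow {ε x : ℝ} (hε : 0 < ε) (hx : 1 ≤ x) :
    Real.arsinh x ≤ 3 ^ ε / ε * x ^ ε :=
  calc Real.arsinh x
      ≤ Real.log (1 + 2 * x) := arsinh_le_log_one_add_two_mul (by linarith)
    _ ≤ Real.log (3 * x) := Real.log_le_log (by linarith) (by linarith)
    _ ≤ (3 * x) ^ ε / ε := Real.log_le_rpow_div (by linarith) hε
    _ = 3 ^ ε / ε * x ^ ε := by rw [Real.mul_rpow (by norm_num) (by linarith)]; ring

end Arsinh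

section ProductMeasure

variable {α β : Type*} [MeasurableSpace α] [MeasurableSpace β]

lemma prod_setOf_mem_closedBall [PseudoMetricSpace α] [SecondCountableTopology α]
    [OpensMeasurableSpace α] {μ : Measure α} [SFinite μ] {ν : Measure β} [SFinite ν]
    {s : Set β} {m : β → α} {ρ : β → ℝ} (hs : MeasurableSet s) (hm : Measurable m)
    (hρ : Measurable ρ) :
    μ.prod ν {x | x.2 ∈ s ∧ x.1 ∈ Metric.closedBall (m x.2) (ρ x.2)} =
      ∫⁻ y in s, μ (Metric.closedBall (m y) (ρ y)) ∂ν := by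
  have hmeas : MeasurableSet
      {x : α × β | x.2 ∈ s ∧ x.1 ∈ Metric.closedBall (m x.2) (ρ x.2)} :=
    (measurable_snd hs).inter <| measurableSet_le
      (measurable_fst.dist (hm.comp measurable_snd)) (hρ.comp measurable_snd)
  rw [Measure.prod_apply_symm hmeas, ← lintegral_indicator hs]
  congr 1 with y
  by_cases hy : y ∈ s
  · rw [Set.indicator_of_mem hy]
    congr 1 with a
    exact and_iff_right hy
  · simp [hy, Set.preimage]

lemma setLIntegral_prod_snd {μ : Measure α} [SFinite μ] {ν : Measure β} [SFinite ν]
    (s : Set α) (t : Set β) {f : β → ENNReal} (hf : AEMeasurable f (ν.restrict t)) :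
    ∫⁻ x in s ×ˢ t, f x.2 ∂μ.prod ν = μ s * ∫⁻ y in t, f y ∂ν := by
  rw [← Measure.prod_restrict]
  simpa using lintegral_prod_mul (μ := μ.restrict s) (f := fun _ => 1) aemeasurable_const hf

end ProductMeasure

section BottomRows

/-- `Δ₁` of the point `x = (x13, x23, x24)`: the Euclidean norm of `r₃ = (0, 1, x23, x24)`, with
every coordinate of `r₃` written out. -/
noncomputable def bottomRowNorm (x : ℝ × ℝ × ℝ) : ℝ :=
  √((0:ℝ) ^ 2 + 1 ^ 2 + x.2.1 ^ 2 + x.2.2 ^ 2)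

/-- `Δ₂` of the point `x = (x13, x23, x24)`: the area of the parallelogram spanned by
`r₃ = (0, 1, x23, x24)` and `r₄ = (-1, 0, -x13, -x23)`, as the square root of their Gram
determinant. -/
noncomputable def bottomRowsArea (x : ℝ × ℝ × ℝ) : ℝ :=
  √(((0:ℝ) ^ 2 + 1 ^ 2 + x.2.1 ^ 2 + x.2.2 ^ 2) *
      ((-1:ℝ) ^ 2 + 0 ^ 2 + x.1 ^ 2 + x.2.1 ^ 2) -
    ((0:ℝ) * (-1) + 1 * 0 + x.2.1 * (-x.1) + x.2.2 * (-x.2.1)) ^ 2)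

lemma bottomRowNorm_eq (x : ℝ × ℝ × ℝ) :
    bottomRowNorm x = √(1 + x.2.1 ^ 2 + x.2.2 ^ 2) := by
  rw [bottomRowNorm]
  congr 1
  ring

lemma bottomRowsArea_eq (x : ℝ × ℝ × ℝ) :
    bottomRowsArea x =
      √(1 + x.1 ^ 2 + 2 * x.2.1 ^ 2 + x.2.2 ^ 2 + (x.1 * x.2.2 - x.2.1 ^ 2) ^ 2) := by
  rw [bottomRowsArea]
  congr 1
  ring

lemma one_le_bottomRowNorm (x : ℝ × ℝ × ℝ) : 1 ≤ bottomRowNorm x := by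
  rw [bottomRowNorm_eq, Real.one_le_sqrt, add_assoc]
  exact le_add_of_nonneg_right (by positivity)

lemma one_le_bottomRowsArea (x : ℝ × ℝ × ℝ) : 1 ≤ bottomRowsArea x := by
  rw [bottomRowsArea_eq, Real.one_le_sqrt, add_assoc, add_assoc, add_assoc]
  exact le_add_of_nonneg_right (by positivity)

lemma abs_x23_le_bottomRowNorm (x : ℝ × ℝ × ℝ) : |x.2.1| ≤ bottomRowNorm x := by
  rw [bottomRowNorm_eq]
  exact Real.abs_le_sqrt (by linarith [sq_nonneg x.2.2])

lemma abs_x24_le_bottomRowNorm (x : ℝ × ℝ × ℝ) : |x.2.2| ≤ bottomRowNorm x := by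
  rw [bottomRowNorm_eq]
  exact Real.abs_le_sqrt (by linarith [sq_nonneg x.2.1])

lemma sq_add_sq_sub_eq_complete_square (a b c : ℝ) :
    a ^ 2 + (a * c - b) ^ 2 =
      (1 + c ^ 2) * (a - c * b / (1 + c ^ 2)) ^ 2 + b ^ 2 / (1 + c ^ 2) := by
  have : 1 + c ^ 2 ≠ 0 := by positivity
  field_simp
  ring

lemma dist_x13_le_bottomRowsArea_mul (x : ℝ × ℝ × ℝ) :
    dist x.1 (x.2.2 * x.2.1 ^ 2 / (1 + x.2.2 ^ 2)) ≤
      bottomRowsArea x * (√(1 + x.2.2 ^ 2))⁻¹ := by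
  obtain ⟨a, b, c⟩ := x
  have hpos : 0 < 1 + c ^ 2 := by positivity
  have hsquare := sq_add_sq_sub_eq_complete_square a (b ^ 2) c
  have hrest : 0 ≤ (b ^ 2) ^ 2 / (1 + c ^ 2) := by positivity
  rw [bottomRowsArea_eq, ← div_eq_mul_inv, ← Real.sqrt_div' _ hpos.le, Real.dist_eq]
  refine Real.abs_le_sqrt ((le_div_iff₀' hpos).2 ?_)
  linarith [sq_nonneg b, sq_nonneg c]

lemma volume_bottomRows_le {B₁ : ℝ} (hB₁ : 0 ≤ B₁) (B₂ : ℝ) :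
    volume {x | bottomRowNorm x ≤ B₁ ∧ bottomRowsArea x ≤ B₂} ≤
      ENNReal.ofReal (8 * (B₁ * B₂) * Real.arsinh B₁) := by
  let I := Set.Icc (-B₁) B₁
  let center : ℝ × ℝ → ℝ := fun y => y.2 * y.1 ^ 2 / (1 + y.2 ^ 2)
  let radius : ℝ × ℝ → ℝ := fun y => B₂ * (√(1 + y.2 ^ 2))⁻¹
  have hsubset : {x | bottomRowNorm x ≤ B₁ ∧ bottomRowsArea x ≤ B₂} ⊆
      {x | x.2 ∈ I ×ˢ I ∧ x.1 ∈ Metric.closedBall (center x.2) (radius x.2)} := by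
    rintro x ⟨hnorm, harea⟩
    exact ⟨⟨abs_le.1 ((abs_x23_le_bottomRowNorm x).trans hnorm),
      abs_le.1 ((abs_x24_le_bottomRowNorm x).trans hnorm)⟩,
      (dist_x13_le_bottomRowsArea_mul x).trans
        (mul_le_mul_of_nonneg_right harea (by positivity))⟩
  have hvolume_ball (y : ℝ × ℝ) : volume (Metric.closedBall (center y) (radius y)) =
      ENNReal.ofReal (2 * B₂) * ENNReal.ofReal (√(1 + y.2 ^ 2))⁻¹ := by
    rw [Real.volume_closedBall, ← ENNReal.ofReal_mul' (by positivity), mul_assoc]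
  calc volume {x | bottomRowNorm x ≤ B₁ ∧ bottomRowsArea x ≤ B₂}
      ≤ volume {x | x.2 ∈ I ×ˢ I ∧ x.1 ∈ Metric.closedBall (center x.2) (radius x.2)} :=
        measure_mono hsubset
    _ = ∫⁻ y in I ×ˢ I, volume (Metric.closedBall (center y) (radius y)) :=
        prod_setOf_mem_closedBall (measurableSet_Icc.prod measurableSet_Icc)
          (by fun_prop) (by fun_prop)
    _ = ENNReal.ofReal (2 * B₂) *
          (volume I * ∫⁻ c in I, ENNReal.ofReal (√(1 + c ^ 2))⁻¹) := by
        simp_rw [hvolume_ball]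
        rw [lintegral_const_mul _ (by fun_prop), Measure.volume_eq_prod,
          setLIntegral_prod_snd I I (f := fun c => ENNReal.ofReal (√(1 + c ^ 2))⁻¹) (by fun_prop)]
    _ = ENNReal.ofReal (8 * (B₁ * B₂) * Real.arsinh B₁) := by
        have harsinh := Real.arsinh_nonneg_iff.2 hB₁
        rw [setLIntegral_Icc_inv_sqrt_one_add_sq (by linarith), Real.volume_Icc,
          Real.arsinh_neg, ← ENNReal.ofReal_mul (by linarith),
          ← ENNReal.ofReal_mul' (mul_nonneg (by linarith) (by linarith))]
        ring_nf

end BottomRows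

/-- For every `ε > 0` there is `C(ε) > 0` such that for all `B₁, B₂ > 0`, the Lebesgue
measure of the set of `(x13, x23, x24) ∈ ℝ³` with `Δ₁ ≤ B₁` and `Δ₂ ≤ B₂` is at most
`C·(B₁B₂)^{1+ε}`, where `Δ₁` is the Euclidean norm of `r₃ = (0,1,x23,x24)` and `Δ₂` is
the area of the parallelogram spanned by `r₃` and `r₄ = (−1,0,−x13,−x23)`. -/
theorem sp4_unipotent_volume_bound :
    ∀ ε : ℝ, 0 < ε → ∃ C : ℝ, 0 < C ∧ ∀ B₁ B₂ : ℝ, 0 < B₁ → 0 < B₂ →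
      volume {x : ℝ × ℝ × ℝ |
          Real.sqrt ((0:ℝ) ^ 2 + 1 ^ 2 + x.2.1 ^ 2 + x.2.2 ^ 2) ≤ B₁ ∧
          Real.sqrt (((0:ℝ) ^ 2 + 1 ^ 2 + x.2.1 ^ 2 + x.2.2 ^ 2) *
              ((-1:ℝ) ^ 2 + 0 ^ 2 + x.1 ^ 2 + x.2.1 ^ 2) -
            ((0:ℝ) * (-1) + 1 * 0 + x.2.1 * (-x.1) + x.2.2 * (-x.2.1)) ^ 2) ≤ B₂} ≤
        ENNReal.ofReal (C * (B₁ * B₂) ^ ((1:ℝ) + ε)) := by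
  intro ε hε
  refine ⟨8 * (3 ^ ε / ε), by positivity, fun B₁ B₂ hB₁ hB₂ => ?_⟩
  change volume {x | bottomRowNorm x ≤ B₁ ∧ bottomRowsArea x ≤ B₂} ≤ _
  obtain hempty | ⟨x, hnorm, harea⟩ :=
    {x | bottomRowNorm x ≤ B₁ ∧ bottomRowsArea x ≤ B₂}.eq_empty_or_nonempty
  · simp [hempty]
  have one_le_B₁ : 1 ≤ B₁ := (one_le_bottomRowNorm x).trans hnorm
  have one_le_B₂ : 1 ≤ B₂ := (one_le_bottomRowsArea x).trans harea
  refine (volume_bottomRows_le hB₁.le B₂).trans (ENNReal.ofReal_le_ofReal ?_)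
  calc 8 * (B₁ * B₂) * Real.arsinh B₁
      ≤ 8 * (B₁ * B₂) * (3 ^ ε / ε * (B₁ * B₂) ^ ε) := by
        gcongr
        refine (arsinh_le_rpow hε one_le_B₁).trans ?_
        gcongr
        exact le_mul_of_one_le_right hB₁.le one_le_B₂
    _ = 8 * (3 ^ ε / ε) * (B₁ * B₂) ^ (1 + ε) := by
        rw [Real.rpow_one_add' (by positivity) (by positivity)]
        ring
end

section
/- Let b ≥ 1 and let I ⊆ ℝ be an interval of length |I| ≥ 1. Then the two-dimensional Lebesgue measure of the set {(x, y) ∈ [−b, b]² : x·y ∈ I} is at most 4·|I|·(1 + log b). -/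
open MeasureTheory

/-!
Cut the square at `|x| = 1 / b`. The strip `|x| ≤ 1 / b` has area `4`. For every other `x` the
fibre `{y | x * y ∈ I}` has measure `|I| / |x|`, and integrating this over `1 / b < |x| ≤ b` gives
`2 * |I| * log (b ^ 2) = 4 * |I| * log b`.
-/

open Set

lemma lintegral_comp_abs (f : ℝ → ENNReal) :
    ∫⁻ x, f |x| = 2 * ∫⁻ x in Ioi 0, f x := by
  have setLIntegral_pos : ∫⁻ x in Ioi 0, f |x| = ∫⁻ x in Ioi 0, f x :=
    setLIntegral_congr_fun measurableSet_Ioi fun x hx => by rw [abs_of_pos hx]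
  have setLIntegral_neg : ∫⁻ x in Iio 0, f |x| = ∫⁻ x in Ioi 0, f |x| := by
    simpa using (Measure.measurePreserving_neg (volume : Measure ℝ)).setLIntegral_comp_preimage_emb
      (MeasurableEquiv.neg ℝ).measurableEmbedding (fun x => f |x|) (Ioi 0)
  rw [← lintegral_add_compl _ (measurableSet_Ioi (a := (0 : ℝ))), compl_Ioi,
    ← restrict_Iio_eq_restrict_Iic, setLIntegral_neg, setLIntegral_pos, two_mul]

lemma setLIntegral_preimage_abs {s : Set ℝ} (hs : MeasurableSet s) (hpos : s ⊆ Ioi 0)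
    (f : ℝ → ENNReal) : ∫⁻ x in abs ⁻¹' s, f |x| = 2 * ∫⁻ x in s, f x := by
  rw [← lintegral_indicator (hs.preimage measurable_abs), ← inter_eq_left.mpr hpos,
    ← setLIntegral_indicator hs, ← lintegral_comp_abs, inter_eq_left.mpr hpos]
  rfl

lemma setLIntegral_Ioc_ofReal_inv {c a : ℝ} (hc : 0 < c) (hca : c ≤ a) :
    ∫⁻ x in Ioc c a, ENNReal.ofReal x⁻¹ = ENNReal.ofReal (Real.log (a / c)) := by
  have integrable_inv : IntegrableOn (fun x : ℝ => x⁻¹) (Ioc c a) := by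
    rw [← intervalIntegrable_iff_integrableOn_Ioc_of_le hca, intervalIntegrable_inv_iff]
    exact .inr (notMem_uIcc_of_lt hc (hc.trans_le hca))
  have ae_inv_nonneg : ∀ᵐ x ∂volume.restrict (Ioc c a), 0 ≤ x⁻¹ :=
    ae_restrict_of_forall_mem measurableSet_Ioc fun x hx => inv_nonneg.2 (hc.trans hx.1).le
  rw [← ofReal_integral_eq_lintegral_ofReal integrable_inv ae_inv_nonneg,
    ← intervalIntegral.integral_of_le hca, integral_inv_of_pos hc (hc.trans_le hca)]

lemma setLIntegral_preimage_abs_Ioc_ofReal_abs_inv {c a : ℝ} (hc : 0 < c) (hca : c ≤ a) :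
    ∫⁻ x in abs ⁻¹' Ioc c a, ENNReal.ofReal |x⁻¹| = 2 * ENNReal.ofReal (Real.log (a / c)) := by
  simp_rw [abs_inv]
  rw [setLIntegral_preimage_abs measurableSet_Ioc (fun x hx => hc.trans hx.1)
    (fun x => ENNReal.ofReal x⁻¹), setLIntegral_Ioc_ofReal_inv hc hca]

lemma volume_setOf_fst_mem_mul_mem_le {s : Set ℝ} (hs : MeasurableSet s) (I : Set ℝ) :
    volume {p : ℝ × ℝ | p.1 ∈ s ∧ p.1 * p.2 ∈ I} ≤
      (∫⁻ x in s, ENNReal.ofReal |x⁻¹|) * volume I := by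
  wlog hI : MeasurableSet I generalizing I
  · rw [← measure_toMeasurable I]
    refine le_trans (measure_mono ?_) (this _ (measurableSet_toMeasurable volume I))
    exact fun p hp => ⟨hp.1, subset_toMeasurable volume I hp.2⟩
  have measurable_region : MeasurableSet {p : ℝ × ℝ | p.1 ∈ s ∧ p.1 * p.2 ∈ I} :=
    (measurable_fst hs).inter ((measurable_fst.mul measurable_snd) hI)
  have fibre_le : ∀ᵐ x : ℝ, volume (Prod.mk x ⁻¹' {p : ℝ × ℝ | p.1 ∈ s ∧ p.1 * p.2 ∈ I}) ≤
      s.indicator (fun x => ENNReal.ofReal |x⁻¹| * volume I) x := by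
    filter_upwards [Measure.ae_ne volume 0] with x hx
    by_cases hxs : x ∈ s
    · simp only [preimage_ofPred_eq, hxs, true_and, indicator_of_mem]
      exact (Real.volume_preimage_mul_left hx I).le
    · simp [hxs]
  calc volume {p : ℝ × ℝ | p.1 ∈ s ∧ p.1 * p.2 ∈ I}
      ≤ ∫⁻ x, s.indicator (fun x => ENNReal.ofReal |x⁻¹| * volume I) x := by
        rw [Measure.volume_eq_prod, Measure.prod_apply measurable_region]
        exact lintegral_mono_ae fibre_le
    _ = (∫⁻ x in s, ENNReal.ofReal |x⁻¹|) * volume I := by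
        rw [lintegral_indicator hs, lintegral_mul_const _ (by fun_prop)]

lemma volume_rectangle_mul_mem_le {a c : ℝ} (hc : 0 < c) (hca : c ≤ a) (b : ℝ) (I : Set ℝ) :
    volume {p : ℝ × ℝ | p.1 ∈ Icc (-a) a ∧ p.2 ∈ Icc (-b) b ∧ p.1 * p.2 ∈ I} ≤
      ENNReal.ofReal (4 * c * b) + 2 * ENNReal.ofReal (Real.log (a / c)) * volume I := by
  have region_subset :
      {p : ℝ × ℝ | p.1 ∈ Icc (-a) a ∧ p.2 ∈ Icc (-b) b ∧ p.1 * p.2 ∈ I} ⊆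
        Icc (-c) c ×ˢ Icc (-b) b ∪ {p | p.1 ∈ abs ⁻¹' Ioc c a ∧ p.1 * p.2 ∈ I} := by
    rintro ⟨x, y⟩ ⟨hx, hy, hxy⟩
    rcases le_or_gt |x| c with hxc | hxc
    · exact .inl ⟨abs_le.1 hxc, hy⟩
    · exact .inr ⟨⟨hxc, abs_le.2 hx⟩, hxy⟩
  have volume_strip : volume (Icc (-c) c ×ˢ Icc (-b) b) = ENNReal.ofReal (4 * c * b) := by
    rw [Measure.volume_eq_prod, Measure.prod_prod, Real.volume_Icc, Real.volume_Icc,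
      ← ENNReal.ofReal_mul (by linarith)]
    ring_nf
  have volume_off_strip := volume_setOf_fst_mem_mul_mem_le
    (measurableSet_Ioc.preimage measurable_abs : MeasurableSet (abs ⁻¹' Ioc c a)) I
  rw [setLIntegral_preimage_abs_Ioc_ofReal_abs_inv hc hca] at volume_off_strip
  exact (measure_mono region_subset).trans
    ((measure_union_le _ _).trans (add_le_add volume_strip.le volume_off_strip))

theorem hyperbola_region_volume_bound_general {b : ℝ} (hb : 1 ≤ b) (I : Set ℝ) :
    volume {p : ℝ × ℝ | p.1 ∈ Icc (-b) b ∧ p.2 ∈ Icc (-b) b ∧ p.1 * p.2 ∈ I} ≤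
      4 * (1 + volume I * ENNReal.ofReal (Real.log b)) := by
  have hb₀ : 0 < b := one_pos.trans_le hb
  have log_ratio : Real.log (b / b⁻¹) = 2 * Real.log b := by
    rw [div_inv_eq_mul, Real.log_mul hb₀.ne' hb₀.ne', two_mul]
  refine (volume_rectangle_mul_mem_le (inv_pos.2 hb₀)
    ((inv_le_one_of_one_le₀ hb).trans hb) b I).trans_eq ?_
  rw [log_ratio, inv_mul_cancel_right₀ hb₀.ne', ENNReal.ofReal_mul zero_le_two,
    ENNReal.ofReal_ofNat, ENNReal.ofReal_ofNat]
  ring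

/-- Let `b ≥ 1` and let `I ⊆ ℝ` be an interval of length `≥ 1`. Then the Lebesgue measure
of `{(x,y) ∈ [−b,b]² : x·y ∈ I}` is at most `4·|I|·(1 + log b)`. -/
theorem hyperbola_region_volume_bound
    (b : ℝ) (hb : 1 ≤ b) (I : Set ℝ) (hI : I.OrdConnected)
    (hlen : 1 ≤ volume I) :
    volume {p : ℝ × ℝ | p.1 ∈ Set.Icc (-b) b ∧ p.2 ∈ Set.Icc (-b) b ∧ p.1 * p.2 ∈ I} ≤
      4 * volume I * ENNReal.ofReal (1 + Real.log b) := by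
  rw [ENNReal.ofReal_add zero_le_one (Real.log_nonneg hb), ENNReal.ofReal_one,
    mul_assoc, mul_one_add]
  exact (hyperbola_region_volume_bound_general hb I).trans (by gcongr)
end

section
/- Let p be a prime and let r, c, d be integers with 0 ≤ c ≤ d and 2d ≤ r. Define 𝔖 = ∑ e(a/p^c + b₃/p^{2d}), where the sum runs over all integers a, b₁, b₂, b₃ with 0 ≤ a < p^d and 0 ≤ b₁, b₂, b₃ < p^r, subject to the divisibility conditions p^d | b₂, p^d | b₃, p^{c+d} | (b₁·p^d − a·b₂), and p^{c+d} | (b₂·p^d − a·b₃). Then 𝔖 = p^{3r} if (c,d) = (0,0); 𝔖 = −p^{3r−4} if (c,d) = (1,1); and 𝔖 = 0 otherwise. -/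
/-!
Substituting `b₂ = p ^ d * t` and `b₃ = p ^ d * s`, the divisibility conditions become
`b₁ ≡ a * t [MOD p ^ c]` and `p ^ c ∣ a * s`, so `b₁` and `t` only contribute counting factors.
The remaining `s` form a subgroup modulo `p ^ d`, on which the character `s ↦ e(s / p ^ d)` sums
to zero unless that subgroup is trivial, that is, unless `c = d` and `a` is prime to `p ^ d`.
What is left is the sum of the primitive `p ^ d`-th roots of unity, which is `μ (p ^ d)`.
-/

open Finset ArithmeticFunction
open scoped ArithmeticFunction.Moebius

section RangeSums

variable {M : Type*} [AddCommMonoid M] {m : ℕ}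

lemma sum_range_mul_of_eq_zero_of_not_dvd (hm : m ≠ 0) (k : ℕ) {f : ℕ → M}
    (hf : ∀ n, ¬ m ∣ n → f n = 0) :
    ∑ n ∈ range (m * k), f n = ∑ j ∈ range k, f (m * j) := by
  have hinj : Set.InjOn (m * ·) (range k : Set ℕ) := (mul_right_injective₀ hm).injOn
  rw [← sum_image hinj]
  refine (sum_subset (fun n hn ↦ ?_) fun n hn hn' ↦ hf n ?_).symm
  · obtain ⟨j, hj, rfl⟩ := mem_image.mp hn
    exact mem_range.mpr (Nat.mul_lt_mul_of_pos_left (mem_range.mp hj) (Nat.pos_of_ne_zero hm))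
  · rintro ⟨j, rfl⟩
    exact hn' (mem_image_of_mem _ (mem_range.mpr (Nat.lt_of_mul_lt_mul_left (mem_range.mp hn))))

lemma sum_range_mul_ite_modEq (hm : m ≠ 0) (k v : ℕ) (x : M) :
    ∑ n ∈ range (m * k), (if n ≡ v [MOD m] then x else 0) = k • x := by
  have hm' : 0 < m := Nat.pos_of_ne_zero hm
  rw [← sum_filter, sum_const, ← Nat.count_eq_card_filter_range, Nat.count_modEq_card _ hm']
  simp [hm']

end RangeSums

lemma sum_divisors_ite_dvd_moebius {N : ℕ} (hN : N ≠ 0) (a : ℕ) :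
    ∑ t ∈ N.divisors, (if t ∣ a then μ t else 0) = if N.Coprime a then 1 else 0 := by
  have hdivisors : {t ∈ N.divisors | t ∣ a} = (N.gcd a).divisors := by
    ext t
    simp [Nat.dvd_gcd_iff, hN]
  rw [← sum_filter, hdivisors, ← coe_mul_zeta_apply, moebius_mul_coe_zeta, one_apply]

section PrimitiveRoots

variable {R : Type*} [CommRing R] [IsDomain R] {ζ : R} {N : ℕ}

lemma sum_range_pow_mul_eq_ite (hζ : IsPrimitiveRoot ζ N) {m K : ℕ} (hK : N ∣ m * K) :
    ∑ j ∈ range K, ζ ^ (m * j) = if N ∣ m then (K : R) else 0 := by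
  simp only [pow_mul]
  split_ifs with hm
  · simp [(hζ.pow_eq_one_iff_dvd m).mpr hm]
  · have hne : ζ ^ m - 1 ≠ 0 := sub_ne_zero.mpr fun h ↦ hm ((hζ.pow_eq_one_iff_dvd m).mp h)
    refine (mul_eq_zero.mp ?_).resolve_left hne
    rw [mul_geom_sum, ← pow_mul, (hζ.pow_eq_one_iff_dvd _).mpr hK, sub_self]

lemma sum_range_mul_ite_dvd_pow (hζ : IsPrimitiveRoot ζ N) (hN : N ≠ 0) {m : ℕ} (hm : m ∣ N)
    (k : ℕ) :
    ∑ s ∈ range (N * k), (if m ∣ s then ζ ^ s else 0) = if m = N then (k : R) else 0 := by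
  obtain ⟨n, rfl⟩ := hm
  have hm0 : m ≠ 0 := left_ne_zero_of_mul hN
  have hperiod : m * n ∣ m * (n * k) := ⟨k, (mul_assoc m n k).symm⟩
  rw [mul_assoc, sum_range_mul_of_eq_zero_of_not_dvd hm0 _ fun s hs ↦ if_neg hs]
  simp only [dvd_mul_right, if_true]
  rw [sum_range_pow_mul_eq_ite hζ hperiod]
  have hdvd_iff : m * n ∣ m ↔ n = 1 := by
    simpa using Nat.mul_dvd_mul_iff_left (b := n) (c := 1) (Nat.pos_of_ne_zero hm0)
  have heq_iff : m = m * n ↔ n = 1 := by simp [hm0]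
  simp only [hdvd_iff, heq_iff]
  split_ifs with hn <;> simp [hn]

lemma sum_range_ite_coprime_pow_eq_moebius (hζ : IsPrimitiveRoot ζ N) (hN : N ≠ 0) :
    ∑ a ∈ range N, (if N.Coprime a then ζ ^ a else 0) = (μ N : R) := by
  calc ∑ a ∈ range N, (if N.Coprime a then ζ ^ a else 0)
      = ∑ a ∈ range N, ∑ t ∈ N.divisors, (μ t : R) * (if t ∣ a then ζ ^ a else 0) := by
        refine sum_congr rfl fun a _ ↦ ?_
        have h := congrArg (fun z : ℤ ↦ (z : R) * ζ ^ a) (sum_divisors_ite_dvd_moebius hN a)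
        simpa [sum_mul, ite_mul, mul_ite] using h.symm
    _ = ∑ t ∈ N.divisors, (μ t : R) * ∑ a ∈ range N, (if t ∣ a then ζ ^ a else 0) := by
        simp only [mul_sum]
        exact sum_comm
    _ = ∑ t ∈ N.divisors, (μ t : R) * (if t = N then 1 else 0) := by
        refine sum_congr rfl fun t ht ↦ ?_
        have h := sum_range_mul_ite_dvd_pow hζ hN (Nat.dvd_of_mem_divisors ht) 1
        rw [mul_one, Nat.cast_one] at h
        rw [h]
    _ = (μ N : R) := by simp [hN]

lemma sum_range_mul_ite_dvd_mul_pow (hζ : IsPrimitiveRoot ζ N) (hN : N ≠ 0) {L : ℕ} (hL : L ∣ N)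
    (k a : ℕ) :
    ∑ s ∈ range (N * k), (if L ∣ a * s then ζ ^ s else 0) =
      if L = N ∧ L.Coprime a then (k : R) else 0 := by
  have hL0 : 0 < L := Nat.pos_of_dvd_of_pos hL (Nat.pos_of_ne_zero hN)
  have hg0 : 0 < L.gcd a := Nat.gcd_pos_of_pos_left a hL0
  have hdiv : L / L.gcd a ∣ L := Nat.div_dvd_of_dvd (Nat.gcd_dvd_left L a)
  have hdvd_iff (s : ℕ) : L ∣ a * s ↔ L / L.gcd a ∣ s := by
    rw [Nat.div_dvd_iff_dvd_mul (Nat.gcd_dvd_left L a) hg0, Nat.dvd_gcd_mul_iff_dvd_mul]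
  have heq_iff : L / L.gcd a = N ↔ L = N ∧ L.Coprime a := by
    constructor
    · intro h
      have hLN : L = N := Nat.dvd_antisymm hL (h ▸ hdiv)
      exact ⟨hLN, (Nat.div_eq_self.mp (h.trans hLN.symm)).resolve_left hL0.ne'⟩
    · rintro ⟨hLN, hcop⟩
      rw [hcop, Nat.div_one, hLN]
  simp only [hdvd_iff, sum_range_mul_ite_dvd_pow hζ hN (hdiv.trans hL), heq_iff]

end PrimitiveRoots

/-- Integrality of the upper-right block `B * (Aᵀ)⁻¹` of a Hecke coset representative, where
`A = [[q ^ c, a], [0, q ^ d]]` and `B = [[b₁, b₂], [b₂, b₃]]`, written as divisibility of its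
entries. It is an `abbrev` so that its decidability is inferred. -/
abbrev HeckeCondition (q c d a b₁ b₂ b₃ : ℕ) : Prop :=
  q ^ d ∣ b₂ ∧ q ^ d ∣ b₃ ∧
    ((q : ℤ) ^ (c + d) ∣ ((b₁ : ℤ) * (q : ℤ) ^ d - (a : ℤ) * (b₂ : ℤ))) ∧
    ((q : ℤ) ^ (c + d) ∣ ((b₂ : ℤ) * (q : ℤ) ^ d - (a : ℤ) * (b₃ : ℤ)))

section HeckeSum

variable {q r c d : ℕ}

lemma heckeCondition_pow_mul_iff (hq : q ≠ 0) (hcd : c ≤ d) (a b₁ t s : ℕ) :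
    HeckeCondition q c d a b₁ (q ^ d * t) (q ^ d * s) ↔
      b₁ ≡ a * t [MOD q ^ c] ∧ q ^ c ∣ a * s := by
  have hqd : (q : ℤ) ^ d ≠ 0 := pow_ne_zero d (mod_cast hq)
  have hb₁ : (b₁ : ℤ) * q ^ d - a * (q ^ d * t : ℕ) = (b₁ - a * t) * q ^ d := by
    push_cast
    ring
  have hb₂ : ((q ^ d * t : ℕ) : ℤ) * q ^ d - a * (q ^ d * s : ℕ) =
      (t * q ^ d - a * s) * q ^ d := by
    push_cast
    ring
  have hdvd : (q : ℤ) ^ c ∣ t * q ^ d := (pow_dvd_pow _ hcd).mul_left _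
  simp only [HeckeCondition, dvd_mul_right, true_and]
  rw [hb₁, hb₂, pow_add, mul_dvd_mul_iff_right hqd, mul_dvd_mul_iff_right hqd,
    dvd_sub_right hdvd, Nat.ModEq.comm, Nat.modEq_iff_dvd]
  norm_cast

lemma sum_heckeCondition {M : Type*} [AddCommMonoid M] (hq : q ≠ 0) (hcd : c ≤ d) (hdr : d ≤ r)
    (a : ℕ) (f : ℕ → M) :
    ∑ b₁ ∈ range (q ^ r), ∑ b₂ ∈ range (q ^ r), ∑ b₃ ∈ range (q ^ r),
        (if HeckeCondition q c d a b₁ b₂ b₃ then f b₃ else 0) =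
      (q ^ (r - c) * q ^ (r - d)) •
        ∑ s ∈ range (q ^ (r - d)), (if q ^ c ∣ a * s then f (q ^ d * s) else 0) := by
  have hsplit {i : ℕ} (hi : i ≤ r) : q ^ r = q ^ i * q ^ (r - i) := by
    rw [← pow_add, Nat.add_sub_cancel' hi]
  have hpow (i : ℕ) : q ^ i ≠ 0 := pow_ne_zero i hq
  calc ∑ b₁ ∈ range (q ^ r), ∑ b₂ ∈ range (q ^ r), ∑ b₃ ∈ range (q ^ r),
        (if HeckeCondition q c d a b₁ b₂ b₃ then f b₃ else 0)
      = ∑ b₁ ∈ range (q ^ r), ∑ t ∈ range (q ^ (r - d)), ∑ s ∈ range (q ^ (r - d)),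
          (if HeckeCondition q c d a b₁ (q ^ d * t) (q ^ d * s) then f (q ^ d * s) else 0) := by
        refine sum_congr rfl fun b₁ _ ↦ ?_
        rw [hsplit hdr, sum_range_mul_of_eq_zero_of_not_dvd (hpow d)]
        on_goal 2 => exact fun b₂ hb₂ ↦ sum_eq_zero fun b₃ _ ↦ if_neg fun h ↦ hb₂ h.1
        refine sum_congr rfl fun t _ ↦ ?_
        exact sum_range_mul_of_eq_zero_of_not_dvd (hpow d) _ fun b₃ hb₃ ↦
          if_neg fun h ↦ hb₃ h.2.1
    _ = ∑ t ∈ range (q ^ (r - d)), ∑ s ∈ range (q ^ (r - d)), ∑ b₁ ∈ range (q ^ r),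
          (if b₁ ≡ a * t [MOD q ^ c] then (if q ^ c ∣ a * s then f (q ^ d * s) else 0)
            else 0) := by
        simp only [heckeCondition_pow_mul_iff hq hcd, ite_and]
        rw [sum_comm]
        exact sum_congr rfl fun t _ ↦ sum_comm
    _ = _ := by
        simp only [hsplit (hcd.trans hdr), sum_range_mul_ite_modEq (hpow c), ← smul_sum,
          sum_const, card_range, smul_smul]

theorem sum_heckeCondition_pow_mul_pow {R : Type*} [CommRing R] [IsDomain R] {ω ζ : R}
    (hq : 1 < q) (hcd : c ≤ d) (hdr : 2 * d ≤ r)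
    (hω : IsPrimitiveRoot ω (q ^ c)) (hζ : IsPrimitiveRoot ζ (q ^ (2 * d))) :
    ∑ a ∈ range (q ^ d), ∑ b₁ ∈ range (q ^ r), ∑ b₂ ∈ range (q ^ r), ∑ b₃ ∈ range (q ^ r),
        (if HeckeCondition q c d a b₁ b₂ b₃ then ω ^ a * ζ ^ b₃ else 0) =
      if c = d then (q : R) ^ (3 * r - 4 * d) * (μ (q ^ d) : R) else 0 := by
  have hq0 : q ≠ 0 := by omega
  have hpow : q ^ d ≠ 0 := pow_ne_zero d hq0
  have hζ' : IsPrimitiveRoot (ζ ^ q ^ d) (q ^ d) :=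
    hζ.pow (by positivity) (by rw [two_mul, pow_add])
  have hsum_s (a : ℕ) : ∑ s ∈ range (q ^ (r - d)),
      (if q ^ c ∣ a * s then ω ^ a * ζ ^ (q ^ d * s) else 0) =
        ω ^ a * if c = d ∧ (q ^ c).Coprime a then (q : R) ^ (r - 2 * d) else 0 := by
    have hlen : q ^ (r - d) = q ^ d * q ^ (r - 2 * d) := by
      rw [← pow_add]
      congr 1
      omega
    have h := sum_range_mul_ite_dvd_mul_pow hζ' hpow (pow_dvd_pow q hcd) (q ^ (r - 2 * d)) a
    simp only [Nat.pow_right_inj hq, Nat.cast_pow] at h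
    simp only [← h, hlen, mul_sum, mul_ite, mul_zero, pow_mul]
  simp only [sum_heckeCondition hq0 hcd (by omega : d ≤ r), hsum_s, ← smul_sum]
  split_ifs with heq
  · subst heq
    have hexp : 3 * r - 4 * c = (r - c) + (r - c) + (r - 2 * c) := by omega
    rw [← sum_range_ite_coprime_pow_eq_moebius hω hpow, hexp]
    simp only [true_and, mul_ite, mul_zero, mul_sum, smul_sum, nsmul_eq_mul, Nat.cast_mul,
      Nat.cast_pow, pow_add]
    exact sum_congr rfl fun a _ ↦ if_congr Iff.rfl (by ring) rfl
  · simp [heq]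

end HeckeSum

lemma moebius_pow_eq_ite {q : ℕ} (hq : q ≠ 1) (d : ℕ) :
    μ (q ^ d) = if d = 0 then 1 else if d = 1 then μ q else 0 := by
  split_ifs with h0 h1
  · simp [h0]
  · simp [h1]
  · exact moebius_eq_zero_of_not_squarefree fun h ↦ h1 ((Nat.squarefree_pow_iff hq h0).mp h).2

theorem sp4_hecke_exponential_sum_eval_general
    {q : ℕ} (hq : 1 < q) {r c d : ℕ} (hcd : c ≤ d) (hdr : 2 * d ≤ r) :
    (∑ a ∈ range (q ^ d), ∑ b₁ ∈ range (q ^ r), ∑ b₂ ∈ range (q ^ r), ∑ b₃ ∈ range (q ^ r),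
        if HeckeCondition q c d a b₁ b₂ b₃ then
          Complex.exp (2 * Real.pi * Complex.I *
            ((a : ℂ) / (q : ℂ) ^ c + (b₃ : ℂ) / (q : ℂ) ^ (2 * d)))
        else 0)
    = if c = 0 ∧ d = 0 then (q : ℂ) ^ (3 * r)
      else if c = 1 ∧ d = 1 then (μ q : ℂ) * (q : ℂ) ^ (3 * r - 4)
      else 0 := by
  have hprim (i : ℕ) := Complex.isPrimitiveRoot_exp (q ^ i) (pow_ne_zero i (by omega))
  have hexp (a b₃ : ℕ) : Complex.exp (2 * Real.pi * Complex.I *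
      ((a : ℂ) / (q : ℂ) ^ c + (b₃ : ℂ) / (q : ℂ) ^ (2 * d))) =
        Complex.exp (2 * Real.pi * Complex.I / (q ^ c : ℕ)) ^ a *
          Complex.exp (2 * Real.pi * Complex.I / (q ^ (2 * d) : ℕ)) ^ b₃ := by
    rw [← Complex.exp_nat_mul, ← Complex.exp_nat_mul, ← Complex.exp_add]
    push_cast
    ring_nf
  simp only [hexp, sum_heckeCondition_pow_mul_pow hq hcd hdr (hprim c) (hprim (2 * d)),
    moebius_pow_eq_ite hq.ne']
  split_ifs <;> first | omega | simp_all [mul_comm]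

/-- Evaluation of the exponential sum `𝔖^{(r)}(c,d)` arising from Hecke coset
representatives for `Sp(4)`: for a prime `p` and `0 ≤ c ≤ d`, `2d ≤ r`, the sum
`∑ e(a/p^c + b₃/p^{2d})` over `0 ≤ a < p^d`, `0 ≤ b₁, b₂, b₃ < p^r` subject to
`p^d ∣ b₂`, `p^d ∣ b₃`, `p^{c+d} ∣ (b₁p^d − ab₂)`, `p^{c+d} ∣ (b₂p^d − ab₃)`
equals `p^{3r}` if `(c,d) = (0,0)`, `−p^{3r−4}` if `(c,d) = (1,1)`, and `0` otherwise. -/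
theorem sp4_hecke_exponential_sum_eval
    (p : ℕ) (hp : p.Prime) (r c d : ℕ) (hcd : c ≤ d) (hdr : 2 * d ≤ r) :
    (∑ a ∈ Finset.range (p ^ d), ∑ b1 ∈ Finset.range (p ^ r),
      ∑ b2 ∈ Finset.range (p ^ r), ∑ b3 ∈ Finset.range (p ^ r),
        if p ^ d ∣ b2 ∧ p ^ d ∣ b3 ∧
            ((p : ℤ) ^ (c + d) ∣ ((b1 : ℤ) * (p : ℤ) ^ d - (a : ℤ) * (b2 : ℤ))) ∧
            ((p : ℤ) ^ (c + d) ∣ ((b2 : ℤ) * (p : ℤ) ^ d - (a : ℤ) * (b3 : ℤ))) then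
          Complex.exp (2 * Real.pi * Complex.I *
            ((a : ℂ) / (p : ℂ) ^ c + (b3 : ℂ) / (p : ℂ) ^ (2 * d)))
        else 0)
    = if c = 0 ∧ d = 0 then (p : ℂ) ^ (3 * r)
      else if c = 1 ∧ d = 1 then -(p : ℂ) ^ (3 * r - 4)
      else 0 := by
  simpa [moebius_apply_prime hp] using sp4_hecke_exponential_sum_eval_general hp.one_lt hcd hdr
end

section
/- Let x be a 4×4 real upper-triangular matrix with all diagonal entries equal to 1, and let w be a 4×4 signed permutation matrix (each row and each column of w has exactly one nonzero entry, equal to ±1). Then every row of the product w·x has Euclidean norm at least 1, and for any two distinct rows u, v of w·x the Gram determinant ‖u‖²·‖v‖² − ⟨u,v⟩² is at least 1. -/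
/-!
Row `i` of `w * x` is `±` a row `x p`, and its `p`-th coordinate is `±1`, so its norm is at least
`1`. By Lagrange's identity the Gram determinant of `u` and `v` is the sum of the squares of all
`2 × 2` minors of the pair. For rows `± x p` and `± x q` of `w * x`, the minor in columns `p` and
`q` is `±(x p p * x q q - x p q * x q p) = ±1`, as one of `x p q`, `x q p` lies below the diagonal.
-/

section GramDet

variable {ι R : Type*} [Fintype ι] [CommRing R]

/-- The Gram determinant of two coordinate vectors for the standard dot product, that is, the
squared area of the parallelogram they span. -/
def gramDet (u v : ι → R) : R :=
  (∑ k, u k ^ 2) * (∑ k, v k ^ 2) - (∑ k, u k * v k) ^ 2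

theorem sum_sum_sq_minor_eq_two_mul_gramDet (u v : ι → R) :
    ∑ i, ∑ j, (u i * v j - u j * v i) ^ 2 = 2 * gramDet u v := by
  have expand_minor (i j : ι) : (u i * v j - u j * v i) ^ 2 =
      u i ^ 2 * v j ^ 2 + v i ^ 2 * u j ^ 2 - 2 * ((u i * v i) * (u j * v j)) := by
    ring
  simp only [expand_minor, Finset.sum_add_distrib, Finset.sum_sub_distrib, ← Finset.mul_sum,
    ← Finset.sum_mul, gramDet]
  ring

variable [LinearOrder R] [IsStrictOrderedRing R]

theorem sq_minor_le_gramDet (u v : ι → R) {p q : ι} (hpq : p ≠ q) :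
    (u p * v q - u q * v p) ^ 2 ≤ gramDet u v := by
  have two_terms_le_sum : (u p * v q - u q * v p) ^ 2 + (u q * v p - u p * v q) ^ 2 ≤
      ∑ ij : ι × ι, (u ij.1 * v ij.2 - u ij.2 * v ij.1) ^ 2 :=
    Finset.add_le_sum (f := fun ij : ι × ι => (u ij.1 * v ij.2 - u ij.2 * v ij.1) ^ 2)
      (fun _ _ => sq_nonneg _) (Finset.mem_univ (p, q)) (Finset.mem_univ (q, p)) (by simp [hpq])
  rw [Fintype.sum_prod_type, sum_sum_sq_minor_eq_two_mul_gramDet] at two_terms_le_sum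
  linarith [sub_sq_comm (u p * v q) (u q * v p)]

theorem one_le_sum_sq_of_sq_eq_one {u : ι → R} {p : ι} (hp : u p ^ 2 = 1) : 1 ≤ ∑ k, u k ^ 2 :=
  hp ▸ Finset.single_le_sum (f := fun k => u k ^ 2) (fun _ _ => sq_nonneg _) (Finset.mem_univ p)

end GramDet

section Rows

variable {ι κ μ R : Type*}

theorem exists_eq_single_of_signed_unit [Ring R] [DecidableEq ι] {a : ι → R}
    (ha : ∃ j, (a j = 1 ∨ a j = -1) ∧ ∀ k, k ≠ j → a k = 0) :
    ∃ j c, c ^ 2 = 1 ∧ a = Pi.single j c := by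
  obtain ⟨j, hj, hzero⟩ := ha
  have hsq : a j ^ 2 = 1 := by
    rcases hj with hj | hj <;> simp [hj]
  exact ⟨j, a j, hsq, Function.eq_update_iff.2 ⟨rfl, hzero⟩⟩

theorem mul_row_eq_smul_row [NonUnitalNonAssocSemiring R] [Fintype ι] [DecidableEq ι]
    {w : Matrix κ ι R} {i : κ} {p : ι} {c : R} (hi : w i = Pi.single p c) (x : Matrix ι μ R) :
    (w * x) i = c • x p := by
  rw [Matrix.mul_apply_eq_vecMul, hi, Matrix.single_vecMul, Matrix.row]

theorem minor_eq_one_of_unitriangular [Ring R] [LinearOrder ι] {x : Matrix ι ι R}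
    (hdiag : ∀ i, x i i = 1) (htri : x.IsUpperTriangular) {p q : ι} (hpq : p ≠ q) :
    x p p * x q q - x p q * x q p = 1 := by
  have off_diagonal_product : x p q * x q p = 0 := by
    rcases hpq.lt_or_gt with hlt | hgt
    · rw [htri hlt, mul_zero]
    · rw [htri hgt, zero_mul]
  rw [hdiag, hdiag, off_diagonal_product, mul_one, sub_zero]

end Rows

theorem one_le_gramDet_smul_rows {ι R : Type*} [Fintype ι] [LinearOrder ι] [CommRing R]
    [LinearOrder R] [IsStrictOrderedRing R] {x : Matrix ι ι R} {c d : R} (hdiag : ∀ i, x i i = 1)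
    (htri : x.IsUpperTriangular) (hc : c ^ 2 = 1) (hd : d ^ 2 = 1) {p q : ι} (hpq : p ≠ q) :
    1 ≤ gramDet (c • x p) (d • x q) :=
  calc 1 = c ^ 2 * d ^ 2 * (x p p * x q q - x p q * x q p) ^ 2 := by
        rw [hc, hd, minor_eq_one_of_unitriangular hdiag htri hpq, one_pow, mul_one, mul_one]
    _ = ((c • x p) p * (d • x q) q - (c • x p) q * (d • x q) p) ^ 2 := by
        simp only [Pi.smul_apply, smul_eq_mul]
        ring
    _ ≤ gramDet (c • x p) (d • x q) := sq_minor_le_gramDet _ _ hpq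

theorem signed_permutation_unipotent_row_bounds_general {ι κ : Type*} [Fintype ι] [LinearOrder ι]
    {x : Matrix ι ι ℝ} {w : Matrix κ ι ℝ} (hxdiag : ∀ i, x i i = 1) (hxtri : x.IsUpperTriangular)
    (hwrow : ∀ i, ∃ j, (w i j = 1 ∨ w i j = -1) ∧ ∀ k, k ≠ j → w i k = 0)
    (hwcol : ∀ j, {i | w i j ≠ 0}.Subsingleton) :
    (∀ i, 1 ≤ √(∑ k, (w * x) i k ^ 2)) ∧
      ∀ i j, i ≠ j → 1 ≤ gramDet ((w * x) i) ((w * x) j) := by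
  choose σ ε hε hw using fun i => exists_eq_single_of_signed_unit (hwrow i)
  have row_eq (i : κ) : (w * x) i = ε i • x (σ i) := mul_row_eq_smul_row (hw i) x
  have entry_ne_zero (i : κ) : w i (σ i) ≠ 0 := by
    rw [hw i, Pi.single_eq_same]
    exact (IsUnit.of_pow_eq_one (hε i) two_ne_zero).ne_zero
  have σ_injective : Function.Injective σ := fun i j hij =>
    hwcol (σ j) (hij ▸ entry_ne_zero i) (entry_ne_zero j)
  refine ⟨fun i => ?_, fun i j hij => ?_⟩
  · rw [Real.one_le_sqrt, row_eq]
    exact one_le_sum_sq_of_sq_eq_one (p := σ i) (by simp [hxdiag, hε])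
  · rw [row_eq, row_eq]
    exact one_le_gramDet_smul_rows hxdiag hxtri (hε i) (hε j) (σ_injective.ne hij)

/-- Let `x` be a `4×4` real upper-triangular matrix with unit diagonal and `w` a signed
permutation matrix. Then every row of `w·x` has Euclidean norm at least `1`, and for any
two distinct rows `u, v` of `w·x` the Gram determinant `‖u‖²‖v‖² − ⟨u,v⟩²` is at least `1`. -/
theorem signed_permutation_unipotent_row_bounds
    (x w : Matrix (Fin 4) (Fin 4) ℝ)
    (hxdiag : ∀ i, x i i = 1)
    (hxlow : ∀ i j, j < i → x i j = 0)
    (hwrow : ∀ i, ∃ j, (w i j = 1 ∨ w i j = -1) ∧ ∀ k, k ≠ j → w i k = 0)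
    (hwcol : ∀ j, ∃ i, (w i j = 1 ∨ w i j = -1) ∧ ∀ k, k ≠ i → w k j = 0) :
    (∀ i, 1 ≤ Real.sqrt (∑ k, ((w * x) i k) ^ 2)) ∧
    (∀ i j, i ≠ j →
      1 ≤ (∑ k, ((w * x) i k) ^ 2) * (∑ k, ((w * x) j k) ^ 2) -
        (∑ k, (w * x) i k * (w * x) j k) ^ 2) := by
  exact signed_permutation_unipotent_row_bounds_general hxdiag hxlow hwrow fun j =>
    (hwcol j).elim fun _ hr => Set.subsingleton_singleton.anti fun i => not_imp_comm.1 (hr.2 i)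
end
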